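/- (Major/Minor Theorem) There do not exist positive integers a, b, c and a', b', c' with a < b, a' < b', a² + b² = c², a'² + b'² = c'² such that the symphonic major derivative of [a, b, c] equals the symphonic minor derivative of [a', b', c'], i.e. such that c(a+b) = c'(b'−a'), ab = a'b', and ab + c² = c'² − a'b'. -/

import Mathlib

/-!
Since `ab = a'b'`, comparing the third entries gives `c'² = c² + 2ab = (a + b)²`, so with
`d = a' + b'` the squares `(b - a)²`, `c²`, `(a + b)²`, `d²` are in arithmetic progression with
common difference `2ab ≠ 0`. Four squares in progression are excluded as follows. Writing them as
`m - 3e, m - e, m + e, m + 3e`, the product `p` of the four roots satisfies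
`p² = (m² - 9e²)(m² - e²)`, so that with `s = 2me`
`p² + s² = (m² - 3e²)²` and `p² + 4s² = (m² + 3e²)²`.

The system `p² + s² = □`, `p² + 4s² = □` with `p s ≠ 0` is impossible by descent on `|p s|`
(`no_concordant`). One may take `p, s` coprime. If `p = 2t`, then `(s, t)` is a smaller solution.
If `p` is odd, parametrizing both Pythagorean triples gives
`p = α² - β² = γ² - δ²`, `s = 2αβ = γδ`; factoring `γδ = 2αβ` into four common parts produces a
smaller solution (`descent_step`).
-/

/-- For odd `γ` and even `δ` with `γδ = 2αβ` and `γ² - δ² = α² - β²`, write `γ = PQ`, `δ = 2RS`, `α = PR`, `β = QS`; then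
`(P, S)` solves the same concordant system, and `αβ = PS · QR`. -/
lemma descent_step {α β γ δ : ℤ} (hαβ : IsCoprime α β) (hγδ : IsCoprime γ δ)
    (hγ : γ % 2 = 1) (hδ : δ % 2 = 0) (hmul : γ * δ = 2 * (α * β))
    (hsq : γ ^ 2 - δ ^ 2 = α ^ 2 - β ^ 2) (hne : α * β ≠ 0) :
    ∃ P S Q R : ℤ, α * β = P * S * (Q * R) ∧ P ^ 2 + S ^ 2 = R ^ 2 ∧
      P ^ 2 + 4 * S ^ 2 = Q ^ 2 := by
  obtain ⟨ε, rfl⟩ : (2 : ℤ) ∣ δ := Int.dvd_of_emod_eq_zero hδ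
  have hε : γ * ε = α * β := by linarith
  have hα : α ≠ 0 := left_ne_zero_of_mul hne
  have hP : 0 < Int.gcd γ α := Int.gcd_pos_of_ne_zero_right _ hα
  obtain ⟨Q, R, hQR, hQ, hR⟩ := Int.exists_gcd_one hP
  generalize (Int.gcd γ α : ℤ) = P at hQ hR
  subst hQ hR
  have hP0 : P ≠ 0 := right_ne_zero_of_mul hα
  have hR0 : R ≠ 0 := left_ne_zero_of_mul hα
  have h1 : Q * ε = R * β := mul_left_cancel₀ hP0 (by linarith)
  have hQR' : IsCoprime Q R := Int.isCoprime_iff_gcd_eq_one.2 hQR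
  obtain ⟨S, rfl⟩ : Q ∣ β := hQR'.dvd_of_dvd_mul_left ⟨ε, h1.symm⟩
  have hβ : Q * S ≠ 0 := right_ne_zero_of_mul hne
  have hQ0 : Q ≠ 0 := left_ne_zero_of_mul hβ
  have hS0 : S ≠ 0 := right_ne_zero_of_mul hβ
  have h2 : ε = R * S := mul_left_cancel₀ hQ0 (by linarith)
  subst h2
  have h3 : P ^ 2 * (Q ^ 2 - R ^ 2) = S ^ 2 * (4 * R ^ 2 - Q ^ 2) := by linear_combination hsq
  have hPS : IsCoprime (S ^ 2) (P ^ 2) :=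
    ((hαβ.of_mul_left_right).of_mul_right_right).symm.pow
  obtain ⟨k, hk⟩ : S ^ 2 ∣ Q ^ 2 - R ^ 2 := hPS.dvd_of_dvd_mul_left ⟨_, h3⟩
  have h4 : 4 * R ^ 2 - Q ^ 2 = P ^ 2 * k := by
    apply mul_left_cancel₀ (pow_ne_zero 2 hS0)
    rw [← h3, hk]; ring
  have h5 : 3 * R ^ 2 = k * (P ^ 2 + S ^ 2) := by linear_combination hk + h4
  have hkpos : 0 < k := by
    have : 0 < R ^ 2 := by positivity
    have : 0 < P ^ 2 + S ^ 2 := by positivity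
    by_contra! hk'
    nlinarith
  have hk3 : k ∣ 3 := by
    obtain ⟨u, v, huv⟩ : IsCoprime (Q ^ 2) (R ^ 2) := hQR'.pow
    exact ⟨u * (P ^ 2 + 4 * S ^ 2) + v * (P ^ 2 + S ^ 2), by
      linear_combination (-3) * huv + u * (4 * hk + h4) + v * h5⟩
  have hkle : k ≤ 3 := Int.le_of_dvd (by norm_num) hk3
  obtain ⟨hQo, hPo⟩ : Q % 2 = 1 ∧ P % 2 = 1 := by
    have := Int.odd_mul.1 (Int.odd_iff.2 hγ)
    exact ⟨Int.odd_iff.1 this.1, Int.odd_iff.1 this.2⟩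
  interval_cases k
  ·
    -- `4R² = P² + Q²` is impossible modulo 4 for odd `P`, `Q`.
    have hQ4 := Int.sq_mod_four_eq_one_of_odd (Int.odd_iff.2 hQo)
    have hP4 := Int.sq_mod_four_eq_one_of_odd (Int.odd_iff.2 hPo)
    omega
  · omega
  · exact ⟨P, S, Q, R, by ring, by linarith, by linarith⟩

/-- `p² + s²` and `p² + 4s²` are not both squares when `p s ≠ 0`. -/
lemma no_concordant (n : ℕ) : ∀ p s r q : ℤ, (p * s).natAbs = n → p * s ≠ 0 →
    p ^ 2 + s ^ 2 = r ^ 2 → p ^ 2 + 4 * s ^ 2 = q ^ 2 → False := by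
  induction n using Nat.strong_induction_on with
  | _ n ih =>
  intro p s r q hn hne hr hq
  subst hn
  -- Any solution whose product properly divides `p * s` contradicts minimality.
  have key : ∀ P S R Q t : ℤ, p * s = P * S * t → 1 < t.natAbs →
      P ^ 2 + S ^ 2 = R ^ 2 → P ^ 2 + 4 * S ^ 2 = Q ^ 2 → False := by
    intro P S R Q t ht ht1 hR hQ
    have hPS : P * S ≠ 0 := by
      rintro h
      rw [h, zero_mul] at ht
      exact hne ht
    refine ih _ ?_ P S R Q rfl hPS hR hQ
    rw [ht, Int.natAbs_mul (P * S) t]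
    exact lt_mul_of_one_lt_right (Int.natAbs_pos.2 hPS) ht1
  have hp0 : p ≠ 0 := left_ne_zero_of_mul hne
  have hs0 : s ≠ 0 := right_ne_zero_of_mul hne
  by_cases hg : Int.gcd p s = 1
  swap
  · have hgpos : 0 < Int.gcd p s := Int.gcd_pos_of_ne_zero_left _ hp0
    obtain ⟨P, S, -, hP, hS⟩ := Int.exists_gcd_one hgpos
    have hg1 : 1 < Int.gcd p s := by omega
    generalize Int.gcd p s = g at *
    have hg0 : (g : ℤ) ^ 2 ≠ 0 := by positivity
    obtain ⟨R, rfl⟩ : (g : ℤ) ∣ r := (Int.pow_dvd_pow_iff two_ne_zero).1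
      ⟨P ^ 2 + S ^ 2, by rw [← hr, hP, hS]; ring⟩
    obtain ⟨Q, rfl⟩ : (g : ℤ) ∣ q := (Int.pow_dvd_pow_iff two_ne_zero).1
      ⟨P ^ 2 + 4 * S ^ 2, by rw [← hq, hP, hS]; ring⟩
    refine key P S R Q (g * g) (by rw [hP, hS]; ring) ?_ ?_ ?_
    · rw [Int.natAbs_mul, Int.natAbs_natCast]; nlinarith
    · apply mul_left_cancel₀ hg0
      rw [hP, hS] at hr
      linear_combination hr
    · apply mul_left_cancel₀ hg0
      rw [hP, hS] at hq
      linear_combination hq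
  have hco : IsCoprime p s := Int.isCoprime_iff_gcd_eq_one.2 hg
  rcases Int.emod_two_eq_zero_or_one p with hp | hp
  · obtain ⟨t, rfl⟩ : (2 : ℤ) ∣ p := Int.dvd_of_emod_eq_zero hp
    obtain ⟨w, rfl⟩ : (2 : ℤ) ∣ q := (Int.pow_dvd_pow_iff two_ne_zero).1
      ⟨t ^ 2 + s ^ 2, by rw [← hq]; ring⟩
    exact key s t w r 2 (by ring) (by norm_num) (by linarith) (by linarith)
  · have hco2 : IsCoprime p (2 * s) := by
      refine IsCoprime.mul_right ?_ hco
      exact ⟨1, -(p / 2), by omega⟩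
    have hr0 : 0 < |r| := by
      refine abs_pos.2 ?_
      rintro rfl
      have : 0 < p ^ 2 := by positivity
      nlinarith [sq_nonneg s]
    have hq0 : 0 < |q| := by
      refine abs_pos.2 ?_
      rintro rfl
      have : 0 < p ^ 2 := by positivity
      nlinarith [sq_nonneg s]
    have t1 : PythagoreanTriple p s |r| := by
      unfold PythagoreanTriple
      rw [abs_mul_abs_self]; linarith
    have t2 : PythagoreanTriple p (2 * s) |q| := by
      unfold PythagoreanTriple
      rw [abs_mul_abs_self]; linarith
    obtain ⟨α, β, e1, e2, -, hαβ, -, -⟩ := t1.coprime_classification' hg hp hr0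
    obtain ⟨γ, δ, f1, f2, -, hγδ, hpar, -⟩ :=
      t2.coprime_classification' (Int.isCoprime_iff_gcd_eq_one.1 hco2) hp hq0
    have cαβ := Int.isCoprime_iff_gcd_eq_one.2 hαβ
    have cγδ := Int.isCoprime_iff_gcd_eq_one.2 hγδ
    have hm : γ * δ = 2 * (α * β) := by linarith
    have hαβ0 : α * β ≠ 0 := by
      intro h
      apply hs0
      rw [e2, mul_assoc, h, mul_zero]
    have fin : ∀ P S Q R : ℤ, α * β = P * S * (Q * R) → P ^ 2 + S ^ 2 = R ^ 2 →
        P ^ 2 + 4 * S ^ 2 = Q ^ 2 → False := by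
      intro P S Q R h hR hQ
      have hQR : Q * R ≠ 0 := by
        intro h0
        rw [h0, mul_zero] at h
        exact hαβ0 h
      refine key P S R Q (2 * (p * (Q * R))) ?_ ?_ hR hQ
      · linear_combination p * e2 + 2 * p * h
      · have : 0 < (p * (Q * R)).natAbs := Int.natAbs_pos.2 (mul_ne_zero hp0 hQR)
        omega
    rcases hpar with ⟨h0, h1⟩ | ⟨h1, h0⟩
    · obtain ⟨P, S, Q, R, h, hR, hQ⟩ := descent_step cαβ.symm cγδ.symm h1 h0
        (by linarith) (by linarith) (by rwa [mul_comm])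
      exact fin P S Q R (by linarith) hR hQ
    · obtain ⟨P, S, Q, R, h, hR, hQ⟩ := descent_step cαβ cγδ h1 h0 hm (by linarith) hαβ0
      exact fin P S Q R h hR hQ

/-- **Major/Minor Theorem.** No triple is both a symphonic major derivative and a
symphonic minor derivative. -/
theorem major_minor_theorem :
    ¬ ∃ a b c a' b' c' : ℕ, 0 < a ∧ 0 < b ∧ 0 < c ∧ 0 < a' ∧ 0 < b' ∧ 0 < c' ∧
      a < b ∧ a' < b' ∧ a ^ 2 + b ^ 2 = c ^ 2 ∧ a' ^ 2 + b' ^ 2 = c' ^ 2 ∧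
      c * (a + b) = c' * (b' - a') ∧ a * b = a' * b' ∧
      a * b + c ^ 2 = c' ^ 2 - a' * b' := by
  rintro ⟨a, b, c, a', b', c', ha, hb, hc, ha', hb', hc', hab, hab', h1, h2, -, h4, h5⟩
  have hsum : a * b + c ^ 2 + a' * b' = c' ^ 2 := by
    have : 0 < c ^ 2 := by positivity
    omega
  zify at ha hb hc ha' hb' hab h1 h2 h4 hsum
  -- `(a' + b')² = c² + 4ab` is the last of the four squares in progression.
  have hd : ((a' : ℤ) + b') ^ 2 = a ^ 2 + 4 * a * b + b ^ 2 := by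
    linear_combination h2 - hsum - 3 * h4 - h1
  have hp : (0 : ℤ) < (b - a) * c * (a + b) * (a' + b') := by
    have : (0 : ℤ) < b - a := by linarith
    positivity
  have hs : (0 : ℤ) < 2 * (a ^ 2 + a * b + b ^ 2) * (a * b) := by positivity
  have hP : ((b - a) * c * (a + b) * (a' + b') : ℤ) ^ 2 =
      (b - a) ^ 2 * (a ^ 2 + b ^ 2) * (a + b) ^ 2 * (a ^ 2 + 4 * a * b + b ^ 2) := by
    rw [h1, ← hd]; ring
  -- Here `m = a² + ab + b²` and `e = ab`.
  refine no_concordant _ _ _ ((a ^ 2 + a * b + b ^ 2) ^ 2 - 3 * (a * b) ^ 2)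
    ((a ^ 2 + a * b + b ^ 2) ^ 2 + 3 * (a * b) ^ 2) rfl (mul_pos hp hs).ne' ?_ ?_
  · rw [hP]; ring
  · rw [hP]; ring
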